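/- arXiv:1503.04717 — 7 statements merged into one kernel-verified Lean document; each statement's English description precedes it below -/
import Mathlib

section
/- Let ε ∈ (0, 2/27), let q be a prime with q² ≥ 130 and q² > 1/ε, and set n = q². If Q ⊆ ℝ^{n+1} is a compact set that can be written as the intersection of m closed half-spaces and Q is an ε-approximated formulation of the knapsack polytope P(n+1,ε), then m ≥ n^{(⌊q/2⌋ − 4 + 1)/2}. In particular, any linear description of an ε-approximated formulation of P(n+1,ε) in the original space ℝ^{n+1} requires a number of inequalities super-polynomial in n. -/
noncomputable section

/-- Dot product on `ℝ^d`. -/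
def dot {d : ℕ} (c x : Fin d → ℝ) : ℝ := ∑ i, c i * x i

/-- `Q` is an `ε`-approximated formulation of `P`: `P ⊆ Q` and for every objective `c`,
`max {c·x : x ∈ P} ≥ (1-ε) · max {c·x : x ∈ Q}` (maxima expressed via `sSup`,
both sets being compact). -/
def IsApproxFormulation {d : ℕ} (ε : ℝ) (P Q : Set (Fin d → ℝ)) : Prop :=
  P ⊆ Q ∧ ∀ c : Fin d → ℝ,
    (1 - ε) * sSup ((fun x => dot c x) '' Q) ≤ sSup ((fun x => dot c x) '' P)

/-- The feasible 0/1 points of the knapsack instance defining `P(n+1, ε)` with `n = q²`: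
`x ∈ {0,1}^{n+1}` with `∑_{i=1}^n x_i/(2εq) + n·x_{n+1} ≤ n + 1/(2ε) − 1`. -/
def knapVert (q : ℕ) (ε : ℝ) : Set (Fin (q ^ 2 + 1) → ℝ) :=
  {x | (∀ i, x i = 0 ∨ x i = 1) ∧
    (∑ i : Fin (q ^ 2), x i.castSucc / (2 * ε * q)) + (q ^ 2 : ℝ) * x (Fin.last (q ^ 2))
      ≤ (q ^ 2 : ℝ) + 1 / (2 * ε) - 1}

/-- The knapsack polytope `P(n+1, ε)` with `n = q²`. -/
def knapP (q : ℕ) (ε : ℝ) : Set (Fin (q ^ 2 + 1) → ℝ) := convexHull ℝ (knapVert q ε)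

/-- The point with 0/1 part the indicator of `S` and last coordinate `l`. -/
def pt {n : ℕ} (S : Finset (Fin n)) (l : ℝ) : Fin (n + 1) → ℝ :=
  Fin.snoc (α := fun _ => ℝ) (fun i => if i ∈ S then (1 : ℝ) else 0) l

lemma pt_castSucc {n : ℕ} (S : Finset (Fin n)) (l : ℝ) (i : Fin n) :
    pt S l i.castSucc = if i ∈ S then (1 : ℝ) else 0 := by
  simp [pt]

lemma pt_last {n : ℕ} (S : Finset (Fin n)) (l : ℝ) : pt S l (Fin.last n) = l := by
  simp [pt]

lemma dot_pt {n : ℕ} (c : Fin (n + 1) → ℝ) (S : Finset (Fin n)) (l : ℝ) :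
    dot c (pt S l) = ∑ i ∈ S, c i.castSucc + c (Fin.last n) * l := by
  unfold dot
  rw [Fin.sum_univ_castSucc]
  simp [pt_castSucc, pt_last]

lemma pt_zero_mem (q : ℕ) (hq : 0 < q) (ε : ℝ) (hε0 : 0 < ε) (hε1 : ε < 2 / 27)
    (hqε : 1 / ε < ((q : ℝ) ^ 2)) (R : Finset (Fin (q ^ 2))) (hR : R.card ≤ 2 * q) :
    pt R 0 ∈ knapVert q ε := by
  have hq' : (0 : ℝ) < q := by exact_mod_cast hq
  refine ⟨fun i => ?_, ?_⟩
  · refine Fin.lastCases ?_ (fun i => ?_) i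
    · left; exact pt_last _ _
    · rw [pt_castSucc]; split_ifs <;> simp
  · rw [pt_last, ← Finset.sum_div]
    simp only [pt_castSucc]
    have h1 : (∑ i : Fin (q ^ 2), if i ∈ R then (1 : ℝ) else 0) = R.card := by simp
    rw [h1]
    have h2 : (R.card : ℝ) ≤ 2 * q := by exact_mod_cast hR
    have h3 : (R.card : ℝ) / (2 * ε * q) ≤ 1 / ε := by
      rw [div_le_div_iff₀ (by positivity) hε0]
      nlinarith
    have h4 : (1 : ℝ) ≤ 1 / (2 * ε) := by
      rw [le_div_iff₀ (by positivity)]; linarith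
    linarith

lemma pt_one_mem (q : ℕ) (hq : 0 < q) (ε : ℝ) (hε0 : 0 < ε) (hε1 : ε < 2 / 27)
    (R : Finset (Fin (q ^ 2))) (hR : 4 * R.card ≤ 3 * q) :
    pt R 1 ∈ knapVert q ε := by
  have hq' : (0 : ℝ) < q := by exact_mod_cast hq
  refine ⟨fun i => ?_, ?_⟩
  · refine Fin.lastCases ?_ (fun i => ?_) i
    · right; exact pt_last _ _
    · rw [pt_castSucc]; split_ifs <;> simp
  · rw [pt_last, ← Finset.sum_div]
    simp only [pt_castSucc]
    have h1 : (∑ i : Fin (q ^ 2), if i ∈ R then (1 : ℝ) else 0) = R.card := by simp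
    rw [h1]
    have h2 : 4 * (R.card : ℝ) ≤ 3 * q := by exact_mod_cast hR
    have h3 : (R.card : ℝ) / (2 * ε * q) ≤ 1 / (2 * ε) - 1 := by
      have : 1 / (2 * ε) - 1 = (q - 2 * ε * q) / (2 * ε * q) := by field_simp
      rw [this]
      apply div_le_div_of_nonneg_right _ (by positivity)
      nlinarith
    linarith

/-- The point `χ_S + 0.54 e_{n+1}` is cut off by every approximated formulation. -/
lemma pt_not_mem (q : ℕ) (hq : 0 < q) (ε : ℝ) (hε0 : 0 < ε) (hε1 : ε < 2 / 27)
    (Q : Set (Fin (q ^ 2 + 1) → ℝ)) (hQc : IsCompact Q)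
    (happ : IsApproxFormulation ε (knapP q ε) Q)
    (S : Finset (Fin (q ^ 2))) (hS : S.card = q) : pt S (27 / 50) ∉ Q := by
  intro hmem
  have hq' : (0 : ℝ) < q := by exact_mod_cast hq
  have happ2 := happ.2 (pt S (2 * ε * q))
  have hcont : Continuous (fun x => dot (pt S (2 * ε * q)) x) := by
    unfold dot; fun_prop
  have hbdd : BddAbove ((fun x => dot (pt S (2 * ε * q)) x) '' Q) :=
    (hQc.image hcont).bddAbove
  have h1 := le_csSup hbdd ⟨_, hmem, rfl⟩
  have h1' : (q : ℝ) + 2 * ε * q * (27 / 50) ≤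
      sSup ((fun x => dot (pt S (2 * ε * q)) x) '' Q) := by
    refine le_trans (le_of_eq ?_) h1
    simp only [dot_pt, pt_castSucc, pt_last]
    rw [Finset.sum_congr rfl (fun i hi => if_pos hi)]
    simp [hS]
  have hne : (knapP q ε).Nonempty :=
    ⟨_, subset_convexHull ℝ _ (pt_one_mem q hq ε hε0 hε1 ∅ (by simp))⟩
  have hsub : knapP q ε ⊆ {x | dot (pt S (2 * ε * q)) x ≤ q} := by
    apply convexHull_min
    · rintro x ⟨hx01, hx⟩
      have hnn : ∀ i, 0 ≤ x i := fun i => by rcases hx01 i with h | h <;> simp [h]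
      have hle : ∀ i, x i ≤ 1 := fun i => by rcases hx01 i with h | h <;> simp [h]
      have hd : dot (pt S (2 * ε * q)) x =
          ∑ i ∈ S, x i.castSucc + 2 * ε * q * x (Fin.last _) := by
        unfold dot
        rw [Fin.sum_univ_castSucc]
        simp [pt_castSucc, pt_last]
      show dot _ x ≤ q
      rw [hd]
      rcases hx01 (Fin.last _) with h | h
      · rw [h]
        have : ∑ i ∈ S, x i.castSucc ≤ ∑ i ∈ S, (1 : ℝ) := Finset.sum_le_sum fun i _ => hle _
        simp [hS] at this
        linarith
      · rw [h] at hx ⊢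
        rw [← Finset.sum_div] at hx
        have h5 : ∑ i ∈ S, x i.castSucc ≤ ∑ i : Fin (q ^ 2), x i.castSucc :=
          Finset.sum_le_sum_of_subset_of_nonneg (Finset.subset_univ _) fun i _ _ => hnn _
        have h6 : (∑ i : Fin (q ^ 2), x i.castSucc) / (2 * ε * q) ≤
            (q - 2 * ε * q) / (2 * ε * q) := by
          have : (q - 2 * ε * q) / (2 * ε * q) = 1 / (2 * ε) - 1 := by field_simp
          rw [this]; linarith
        rw [div_le_div_iff_of_pos_right (by positivity)] at h6
        linarith
    · intro x hx y hy s t hs ht hst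
      simp only [Set.mem_setOf_eq] at *
      have : dot (pt S (2 * ε * q)) (s • x + t • y) =
          s * dot (pt S (2 * ε * q)) x + t * dot (pt S (2 * ε * q)) y := by
        unfold dot
        rw [Finset.mul_sum, Finset.mul_sum, ← Finset.sum_add_distrib]
        refine Finset.sum_congr rfl fun i _ => ?_
        simp; ring
      rw [this]
      calc _ ≤ s * (q : ℝ) + t * q := by gcongr
        _ = q := by rw [← add_mul, hst, one_mul]
  have h2 : sSup ((fun x => dot (pt S (2 * ε * q)) x) '' knapP q ε) ≤ q := by
    apply csSup_le (hne.image _)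
    rintro _ ⟨x, hx, rfl⟩
    exact hsub hx
  have h3 : (1 - ε) * ((q : ℝ) + 2 * ε * q * (27 / 50)) ≤ q :=
    le_trans (mul_le_mul_of_nonneg_left h1' (by linarith)) (happ2.trans h2)
  have h4 : 0 < (q : ℝ) * (ε * (2 - 27 * ε)) := by
    have : 0 < 2 - 27 * ε := by linarith
    positivity
  nlinarith

lemma exists_half {α : Type*} [DecidableEq α] (A : Finset α) :
    ∃ B C : Finset α, B ⊆ A ∧ C ⊆ A ∧ 2 * B.card ≤ A.card + 1 ∧ 2 * C.card ≤ A.card + 1 ∧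
      ∀ f : α → ℝ, ∑ i ∈ A, f i = ∑ i ∈ B, f i + ∑ i ∈ C, f i := by
  obtain ⟨B, hB, hc⟩ := Finset.exists_subset_card_eq (s := A) (n := A.card / 2) (by omega)
  refine ⟨B, A \ B, hB, Finset.sdiff_subset, by omega, ?_, fun f => ?_⟩
  · rw [Finset.card_sdiff_of_subset hB]; omega
  · rw [add_comm, Finset.sum_sdiff hB]

/-- One valid inequality cannot cut off two such points if the overlap is small. -/
lemma not_both_cut (q : ℕ) (hq : 0 < q) (ε : ℝ) (hε0 : 0 < ε) (hε1 : ε < 2 / 27)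
    (hqε : 1 / ε < ((q : ℝ) ^ 2)) (c : Fin (q ^ 2 + 1) → ℝ) (b : ℝ)
    (hval : ∀ x ∈ knapVert q ε, dot c x ≤ b)
    (S T : Finset (Fin (q ^ 2))) (hS : S.card = q) (hT : T.card = q)
    (hST : 2 * (S ∩ T).card + 2 ≤ q)
    (h1 : b < dot c (pt S (27 / 50))) (h2 : b < dot c (pt T (27 / 50))) : False := by
  obtain ⟨A1, A2, hA1, hA2, hA1c, hA2c, hA⟩ := exists_half (S \ T)
  obtain ⟨B1, B2, hB1, hB2, hB1c, hB2c, hB⟩ := exists_half (T \ S)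
  have cST : (S \ T).card + (S ∩ T).card = q := by
    rw [Finset.card_sdiff_add_card_inter, hS]
  have cTS : (T \ S).card + (S ∩ T).card = q := by
    rw [Finset.inter_comm, Finset.card_sdiff_add_card_inter, hT]
  have key : ∀ D : Finset (Fin (q ^ 2)), D ⊆ S \ T ∨ D ⊆ T \ S → 2 * D.card + (S ∩ T).card ≤ q + 1 →
      ∑ i ∈ S ∩ T, c i.castSucc + ∑ i ∈ D, c i.castSucc + c (Fin.last _) ≤ b := by
    intro D hD hDc
    have hdisj : Disjoint (S ∩ T) D := by
      rw [Finset.disjoint_left]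
      intro x hx hxD
      simp only [Finset.mem_inter] at hx
      rcases hD with h | h <;> have := h hxD <;> simp_all
    have hm := hval _ (pt_one_mem q hq ε hε0 hε1 ((S ∩ T) ∪ D)
      (by rw [Finset.card_union_of_disjoint hdisj]; omega))
    rw [dot_pt, Finset.sum_union hdisj] at hm
    linarith
  have k1 := key A1 (Or.inl hA1) (by omega)
  have k2 := key A2 (Or.inl hA2) (by omega)
  have k3 := key B1 (Or.inr hB1) (by omega)
  have k4 := key B2 (Or.inr hB2) (by omega)
  have k5 := key ∅ (Or.inl (by simp)) (by simp; omega)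
  have k6 := hval _ (pt_zero_mem q hq ε hε0 hε1 hqε (S ∪ T)
      ((Finset.card_union_le _ _).trans (by omega)))
  rw [dot_pt] at h1 h2 k6
  have e1 := hA (fun i => c i.castSucc)
  have e2 := hB (fun i => c i.castSucc)
  have e3 := Finset.sum_inter_add_sum_sdiff S T (fun i => c i.castSucc)
  have e4 := Finset.sum_inter_add_sum_sdiff T S (fun i => c i.castSucc)
  rw [Finset.inter_comm] at e4
  have e5 : ∑ i ∈ S ∪ T, c i.castSucc = ∑ i ∈ S, c i.castSucc + ∑ i ∈ T \ S, c i.castSucc := by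
    rw [← Finset.sum_union Finset.disjoint_sdiff, Finset.union_sdiff_self_eq_union]
  simp only [Finset.sum_empty] at k5
  linarith

/-- The Nisan–Wigderson style design given by polynomials of degree `< k` over `ZMod q`. -/
lemma exists_design (q k : ℕ) [Fact q.Prime] (hk : 0 < k) :
    ∃ F : (Fin k → ZMod q) → Finset (Fin (q ^ 2)),
      (∀ u, (F u).card = q) ∧ ∀ u v, u ≠ v → (F u ∩ F v).card < k := by
  have hcard : Fintype.card (ZMod q × ZMod q) = q ^ 2 := by
    simp [ZMod.card, sq]
  let e : ZMod q × ZMod q ≃ Fin (q ^ 2) := Fintype.equivFinOfCardEq hcard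
  let P : (Fin k → ZMod q) → Polynomial (ZMod q) := fun u =>
    ((Polynomial.degreeLTEquiv (ZMod q) k).symm u : Polynomial (ZMod q))
  let g : (Fin k → ZMod q) → ZMod q → Fin (q ^ 2) := fun u x => e (x, (P u).eval x)
  have hg : ∀ u, Function.Injective (g u) := by
    intro u x y h
    have := e.injective h
    exact (Prod.ext_iff.1 this).1
  refine ⟨fun u => Finset.univ.image (g u), fun u => ?_, fun u v huv => ?_⟩
  · rw [Finset.card_image_of_injective _ (hg u)]
    simp [ZMod.card]
  · have hne : P u - P v ≠ 0 := by
      intro h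
      apply huv
      have h' : P u = P v := sub_eq_zero.1 h
      exact (Polynomial.degreeLTEquiv (ZMod q) k).symm.injective (Subtype.ext h')
    have hdeg : (P u - P v).natDegree < k := by
      rw [Polynomial.natDegree_lt_iff_degree_lt hne]
      have hu := ((Polynomial.degreeLTEquiv (ZMod q) k).symm u).2
      have hv := ((Polynomial.degreeLTEquiv (ZMod q) k).symm v).2
      exact Polynomial.mem_degreeLT.1 (Submodule.sub_mem _ hu hv)
    have hsub : Finset.univ.image (g u) ∩ Finset.univ.image (g v) ⊆
        (P u - P v).roots.toFinset.image (g u) := by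
      intro y hy
      simp only [Finset.mem_inter, Finset.mem_image, Finset.mem_univ, true_and] at hy
      obtain ⟨⟨x, rfl⟩, ⟨x', hx'⟩⟩ := hy
      have h := e.injective hx'
      have h1 : x' = x := (Prod.ext_iff.1 h).1
      have h2 : (P v).eval x' = (P u).eval x := (Prod.ext_iff.1 h).2
      subst h1
      refine Finset.mem_image_of_mem _ ?_
      rw [Multiset.mem_toFinset, Polynomial.mem_roots hne]
      simp [Polynomial.IsRoot, h2]
    calc _ ≤ _ := Finset.card_le_card hsub
      _ ≤ _ := Finset.card_image_le
      _ ≤ _ := Multiset.toFinset_card_le _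
      _ ≤ _ := Polynomial.card_roots' _
      _ < k := hdeg

/-- for `ε ∈ (0, 2/27)`, `q` prime with `q² ≥ 130` and `q² > 1/ε`, `n = q²`,
any compact `Q ⊆ ℝ^{n+1}` that is the intersection of `m` closed half-spaces and an
`ε`-approximated formulation of the knapsack polytope `P(n+1,ε)` satisfies
`m ≥ n^{(⌊q/2⌋ − 4 + 1)/2}` (a quantity super-polynomial in `n`). -/
theorem knapsack_no_compact_approx_original_space (ε : ℝ) (hε0 : 0 < ε) (hε1 : ε < 2 / 27)
    (q : ℕ) (hq : Nat.Prime q) (hq130 : 130 ≤ q ^ 2) (hqε : 1 / ε < ((q : ℝ) ^ 2))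
    (m : ℕ) (a : Fin m → Fin (q ^ 2 + 1) → ℝ) (b : Fin m → ℝ)
    (Q : Set (Fin (q ^ 2 + 1) → ℝ)) (hQc : IsCompact Q)
    (hQ : Q = ⋂ i, {x : Fin (q ^ 2 + 1) → ℝ | dot (a i) x ≤ b i})
    (happ : IsApproxFormulation ε (knapP q ε) Q) :
    ((q : ℝ) ^ 2) ^ (((q / 2 - 4 + 1 : ℕ) : ℝ) / 2) ≤ (m : ℝ) := by
  haveI : Fact q.Prime := ⟨hq⟩
  have hq0 : 0 < q := hq.pos
  have hq12 : 12 ≤ q := by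
    by_contra h
    have : q ≤ 11 := by omega
    nlinarith
  obtain ⟨F, hFc, hFi⟩ := exists_design q (q / 2 - 4 + 1) (by omega)
  have hcut : ∀ u, ∃ i, b i < dot (a i) (pt (F u) (27 / 50)) := by
    intro u
    have := pt_not_mem q hq0 ε hε0 hε1 Q hQc happ (F u) (hFc u)
    rw [hQ] at this
    simpa using this
  choose f hf using hcut
  have hinj : Function.Injective f := by
    intro u v huv
    by_contra hne
    have hlt := hFi u v hne
    refine not_both_cut q hq0 ε hε0 hε1 hqε (a (f u)) (b (f u)) (fun x hx => ?_) (F u) (F v)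
      (hFc u) (hFc v) (by omega) (hf u) (huv ▸ hf v)
    have hxQ : x ∈ Q := happ.1 (subset_convexHull ℝ _ hx)
    rw [hQ] at hxQ
    exact Set.mem_iInter.1 hxQ (f u)
  have hle := Fintype.card_le_of_injective f hinj
  simp only [Fintype.card_fun, Fintype.card_fin, ZMod.card] at hle
  have hpow : ((q : ℝ) ^ 2) ^ (((q / 2 - 4 + 1 : ℕ) : ℝ) / 2) = (q : ℝ) ^ (q / 2 - 4 + 1) := by
    rw [← Real.rpow_natCast (q : ℝ) 2, ← Real.rpow_mul (Nat.cast_nonneg q),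
      ← Real.rpow_natCast (q : ℝ) (q / 2 - 4 + 1)]
    congr 1
    push_cast
    ring
  rw [hpow]
  exact_mod_cast hle
end
end

section
/- For every ε ∈ (0, 2/27), every constant C > 0 and every degree d ∈ ℕ, there exist arbitrarily large n ∈ ℕ, a nonnegative weight vector a ∈ ℝ^n_+ and a capacity b ≥ 0 such that the knapsack polytope P = conv{x ∈ {0,1}^n : a·x ≤ b} has the following property: every compact set Q ⊆ ℝ^n that is an ε-approximated formulation of P and is an intersection of m closed half-spaces satisfies m > C·n^d. (Hence the family of knapsack polytopes admits no polynomial-size relaxation scheme in the original space.) -/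
noncomputable section

/-- The knapsack polytope `conv {x ∈ {0,1}^n : a·x ≤ b}`. -/
def knapsackPolytope {n : ℕ} (a : Fin n → ℝ) (b : ℝ) : Set (Fin n → ℝ) :=
  convexHull ℝ {x : Fin n → ℝ | (∀ i, x i = 0 ∨ x i = 1) ∧ dot a x ≤ b}

lemma dot_add' {n : ℕ} (c x y : Fin n → ℝ) : dot c (x + y) = dot c x + dot c y := by
  simp [dot, mul_add, Finset.sum_add_distrib]

lemma dot_smul' {n : ℕ} (c x : Fin n → ℝ) (r : ℝ) : dot c (r • x) = r * dot c x := by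
  simp only [dot, Finset.mul_sum, Pi.smul_apply, smul_eq_mul]
  exact Finset.sum_congr rfl fun i _ => by ring

lemma dot_cont {n : ℕ} (c : Fin n → ℝ) : Continuous (fun x => dot c x) := by
  unfold dot; fun_prop

lemma convex_dot_le {n : ℕ} (c : Fin n → ℝ) (r : ℝ) : Convex ℝ {x | dot c x ≤ r} :=
  convex_halfSpace_le ⟨dot_add' c, fun r x => dot_smul' c x r⟩ r

/-- Indicator vector of `S` with an extra first coordinate `t`. -/
def vec {n : ℕ} (t : ℝ) (S : Finset (Fin n)) : Fin (n + 1) → ℝ :=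
  Fin.cons (α := fun _ => ℝ) t (fun i => if i ∈ S then 1 else 0)

lemma dot_vec {n : ℕ} (t : ℝ) (S : Finset (Fin n)) (x : Fin (n + 1) → ℝ) :
    dot (vec t S) x = t * x 0 + ∑ i ∈ S, x i.succ := by
  simp [dot, vec, Fin.sum_univ_succ, Finset.sum_ite_mem]

lemma sum_vec {n : ℕ} (t : ℝ) (S T : Finset (Fin n)) :
    ∑ i ∈ S, vec t T i.succ = ((S ∩ T).card : ℝ) := by
  simp [vec, Finset.sum_ite_mem]

lemma vec_zero {n : ℕ} (t : ℝ) (T : Finset (Fin n)) : vec t T 0 = t := rfl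

lemma vec_mem {n : ℕ} (t : ℝ) (S : Finset (Fin n)) (a : Fin (n + 1) → ℝ) (b : ℝ)
    (ht : t = 0 ∨ t = 1) (h : dot a (vec t S) ≤ b) : vec t S ∈ knapsackPolytope a b := by
  apply subset_convexHull
  refine ⟨fun i => ?_, h⟩
  refine Fin.cases ?_ (fun j => ?_) i
  · exact ht
  · by_cases hj : j ∈ S <;> simp [vec, hj]

/-- The geometric core: a family with small intersections forces many inequalities. -/
lemma core (ε : ℝ) (hε1 : ε < 2 / 27) (n k σ : ℕ) (hkn : k ≤ n) (hσ : 0 < σ)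
    (hk : 2 * k ≤ σ) (F : Finset (Finset (Fin n))) (hF : ∀ S ∈ F, S.card = σ)
    (hI : ∀ S ∈ F, ∀ T ∈ F, S ≠ T → (S ∩ T).card ≤ k)
    (m : ℕ) (A : Fin m → Fin (n + 1) → ℝ) (bb : Fin m → ℝ) (Q : Set (Fin (n + 1) → ℝ))
    (hQ : IsCompact Q) (hQe : Q = ⋂ i, {x : Fin (n + 1) → ℝ | dot (A i) x ≤ bb i})
    (hap : IsApproxFormulation ε
      (knapsackPolytope (vec ((n : ℝ) - k) Finset.univ) n) Q) : F.card ≤ m := by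
  obtain ⟨hPQ, hc⟩ := hap
  have hkn' : (k : ℝ) ≤ n := by exact_mod_cast hkn
  have hk' : 2 * (k : ℝ) ≤ σ := by exact_mod_cast hk
  have hσ' : (0 : ℝ) < σ := by exact_mod_cast hσ
  have h0 : ∀ S : Finset (Fin n), vec 0 S ∈
      knapsackPolytope (vec ((n : ℝ) - k) Finset.univ) n := by
    intro S
    apply vec_mem _ _ _ _ (Or.inl rfl)
    rw [dot_vec, sum_vec, vec_zero]
    have : S.card ≤ n := by simpa using Finset.card_le_univ S
    simpa using this
  have h1 : ∀ S : Finset (Fin n), S.card ≤ k → vec 1 S ∈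
      knapsackPolytope (vec ((n : ℝ) - k) Finset.univ) n := by
    intro S hS
    apply vec_mem _ _ _ _ (Or.inr rfl)
    rw [dot_vec, sum_vec, vec_zero]
    have : (S.card : ℝ) ≤ k := by exact_mod_cast hS
    simp
    linarith
  -- each point is cut off
  have hcut : ∀ S ∈ F, vec (1 / 2) S ∉ Q := by
    intro S hS hmem
    have hcard : (S.card : ℝ) = σ := by exact_mod_cast hF S hS
    have hbd : BddAbove ((fun x => dot (vec ((σ : ℝ) - k) S) x) '' Q) :=
      (hQ.image (dot_cont _)).bddAbove
    have e1 := le_csSup hbd ⟨_, hmem, rfl⟩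
    have e2 : sSup ((fun x => dot (vec ((σ : ℝ) - k) S) x) ''
        (knapsackPolytope (vec ((n : ℝ) - k) Finset.univ) n)) ≤ σ := by
      refine csSup_le (Set.Nonempty.image _ ⟨_, h0 ∅⟩) ?_
      rintro _ ⟨x, hx, rfl⟩
      have : knapsackPolytope (vec ((n : ℝ) - k) Finset.univ) n ⊆
          {x | dot (vec ((σ : ℝ) - k) S) x ≤ σ} := by
        apply convexHull_min _ (convex_dot_le _ _)
        rintro y ⟨hy, hyb⟩
        rw [dot_vec] at hyb
        change dot _ y ≤ _
        rw [dot_vec]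
        have hy0 : ∀ i, 0 ≤ y i := fun i => by rcases hy i with h | h <;> rw [h] <;> norm_num
        have hy1 : ∀ i, y i ≤ 1 := fun i => by rcases hy i with h | h <;> rw [h] <;> norm_num
        have hS1 : ∑ i ∈ S, y i.succ ≤ σ := by
          calc ∑ i ∈ S, y i.succ ≤ ∑ i ∈ S, (1 : ℝ) := Finset.sum_le_sum fun i _ => hy1 _
            _ = σ := by simp [hcard]
        have hS2 : ∑ i ∈ S, y i.succ ≤ ∑ i : Fin n, y i.succ :=
          Finset.sum_le_sum_of_subset_of_nonneg (Finset.subset_univ _) fun i _ _ => hy0 _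
        rcases hy 0 with h | h <;> rw [h] at hyb ⊢ <;> linarith
      exact this hx
    have e3 := hc (vec ((σ : ℝ) - k) S)
    simp only [dot_vec _ _ (vec _ _), sum_vec, vec_zero, Finset.inter_self, hcard] at e1
    nlinarith
  have hex : ∀ S ∈ F, ∃ i, bb i < dot (A i) (vec (1 / 2) S) := by
    intro S hS
    by_contra! h
    apply hcut S hS
    rw [hQe]
    simpa using h
  rcases F.eq_empty_or_nonempty with rfl | ⟨S₀, hS₀⟩
  · simp
  haveI : Nonempty (Fin m) := ⟨(hex S₀ hS₀).choose⟩
  choose! f hf using hex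
  have hinj : Set.InjOn f F := by
    intro S hS T hT hST
    by_contra hne
    have hmid : (1 / 2 : ℝ) • vec (1 / 2) S + (1 / 2 : ℝ) • vec (1 / 2) T =
        (1 / 2 : ℝ) • vec 1 (S ∩ T) + (1 / 2 : ℝ) • vec 0 (S ∪ T) := by
      funext i
      refine Fin.cases ?_ (fun j => ?_) i
      · simp [vec_zero]; norm_num
      · by_cases h : j ∈ S <;> by_cases h' : j ∈ T <;> simp [vec, h, h']
    have hP : (1 / 2 : ℝ) • vec 1 (S ∩ T) + (1 / 2 : ℝ) • vec 0 (S ∪ T) ∈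
        knapsackPolytope (vec ((n : ℝ) - k) Finset.univ) n :=
      convex_convexHull ℝ _ (h1 _ (hI S hS T hT hne)) (h0 _) (by norm_num) (by norm_num)
        (by norm_num)
    rw [← hmid] at hP
    have hq := hPQ hP
    rw [hQe] at hq
    have hq' := Set.mem_iInter.1 hq (f S)
    change dot _ _ ≤ _ at hq'
    rw [dot_add', dot_smul', dot_smul'] at hq'
    have := hf S hS
    have h2 := hf T hT
    rw [← hST] at h2
    linarith
  simpa using Finset.card_le_card_of_injOn f (t := Finset.univ) (by simp) hinj

open Polynomial in
/-- Reed-Solomon set family. -/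
lemma family (p D : ℕ) [Fact p.Prime] (hD : D ≤ p) :
    ∃ F : Finset (Finset (Fin (p * p))), F.card = p ^ D ∧ (∀ S ∈ F, S.card = p) ∧
      ∀ S ∈ F, ∀ T ∈ F, S ≠ T → (S ∩ T).card ≤ D := by
  classical
  let e : ZMod p × ZMod p ≃ Fin (p * p) := Fintype.equivFinOfCardEq (by simp [ZMod.card])
  let P : (Fin D → ZMod p) → (ZMod p)[X] := fun c =>
    ((degreeLTEquiv (ZMod p) D).symm c : (ZMod p)[X])
  have hPinj : Function.Injective P :=
    Subtype.val_injective.comp (degreeLTEquiv (ZMod p) D).symm.injective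
  have hPdeg : ∀ c, (P c).degree < D := fun c =>
    mem_degreeLT.1 ((degreeLTEquiv (ZMod p) D).symm c).2
  have einj : ∀ q : (ZMod p)[X], Function.Injective fun x => e (x, q.eval x) := by
    intro q x y h
    exact (Prod.ext_iff.1 (e.injective h)).1
  let G : (ZMod p)[X] → Finset (Fin (p * p)) := fun q =>
    Finset.univ.image fun x => e (x, q.eval x)
  have hGcard : ∀ q, (G q).card = p := by
    intro q
    rw [Finset.card_image_of_injective _ (einj q)]
    simp [ZMod.card]
  have hint : ∀ c c', c ≠ c' → (G (P c) ∩ G (P c')).card < D := by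
    intro c c' hne
    have hne' : P c - P c' ≠ 0 := sub_ne_zero.2 (hPinj.ne hne)
    have hdeg : (P c - P c').degree < D :=
      lt_of_le_of_lt (degree_sub_le _ _) (max_lt (hPdeg c) (hPdeg c'))
    have hsub : G (P c) ∩ G (P c') ⊆
        (P c - P c').roots.toFinset.image fun x => e (x, (P c).eval x) := by
      intro z hz
      simp only [G, Finset.mem_inter, Finset.mem_image, Finset.mem_univ, true_and] at hz
      obtain ⟨⟨x, rfl⟩, y, hy⟩ := hz
      have h := Prod.ext_iff.1 (e.injective hy)
      simp only at h
      refine Finset.mem_image.2 ⟨x, ?_, rfl⟩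
      rw [Multiset.mem_toFinset, mem_roots hne', IsRoot.def, eval_sub, ← h.2, h.1, sub_self]
    calc _ ≤ _ := Finset.card_le_card hsub
      _ ≤ _ := Finset.card_image_le
      _ ≤ _ := Multiset.toFinset_card_le _
      _ ≤ _ := card_roots' _
      _ < D := (natDegree_lt_iff_degree_lt hne').2 hdeg
  refine ⟨Finset.univ.image fun c => G (P c), ?_, ?_, ?_⟩
  · rw [Finset.card_image_of_injective]
    · simp [ZMod.card]
    · intro c c' h
      by_contra hne
      have := hint c c' hne
      simp only at h
      rw [h, Finset.inter_self, hGcard] at this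
      omega
  · intro S hS
    obtain ⟨c, -, rfl⟩ := Finset.mem_image.1 hS
    exact hGcard _
  · intro S hS T hT hST
    obtain ⟨c, -, rfl⟩ := Finset.mem_image.1 hS
    obtain ⟨c', -, rfl⟩ := Finset.mem_image.1 hT
    exact (hint c c' fun h => hST (by rw [h])).le

/-- for every `ε ∈ (0, 2/27)`, every `C > 0` and every degree `d`, there exist
arbitrarily large `n`, nonnegative weights `a ∈ ℝ^n_+` and a capacity `b ≥ 0` such that every
compact `ε`-approximated formulation of the knapsack polytope `conv {x ∈ {0,1}^n : a·x ≤ b}`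
that is an intersection of `m` closed half-spaces satisfies `m > C·n^d`. Hence knapsack
polytopes admit no PSRS in the original space. -/
theorem knapsack_no_PSRS_original_space (ε : ℝ) (hε0 : 0 < ε) (hε1 : ε < 2 / 27)
    (C : ℝ) (hC : 0 < C) (d : ℕ) (N : ℕ) :
    ∃ n : ℕ, N ≤ n ∧ ∃ (a : Fin n → ℝ) (b : ℝ), (∀ i, 0 ≤ a i) ∧ 0 ≤ b ∧
      ∀ (m : ℕ) (A : Fin m → Fin n → ℝ) (bb : Fin m → ℝ) (Q : Set (Fin n → ℝ)),
        IsCompact Q → Q = ⋂ i, {x : Fin n → ℝ | dot (A i) x ≤ bb i} →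
        IsApproxFormulation ε (knapsackPolytope a b) Q →
        C * (n : ℝ) ^ d < (m : ℝ) := by
  obtain ⟨p, hp, hpp⟩ := Nat.exists_infinite_primes (N + 2 * (3 * d + 1) + ⌈C⌉₊ + 2)
  haveI : Fact p.Prime := ⟨hpp⟩
  obtain ⟨F, hFc, hFs, hFi⟩ := family p (3 * d + 1) (by omega)
  have hpp1 : p ≤ p * p := Nat.le_mul_self p
  have hkn : 3 * d + 1 ≤ p * p := by omega
  refine ⟨p * p + 1, by omega,
    vec (((p * p : ℕ) : ℝ) - ((3 * d + 1 : ℕ) : ℝ)) Finset.univ, ((p * p : ℕ) : ℝ), ?_,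
    by positivity, ?_⟩
  · intro i
    refine Fin.cases ?_ (fun j => ?_) i
    · rw [vec_zero, sub_nonneg]
      exact_mod_cast hkn
    · simp [vec]
  · intro m A bb Q hQ hQe hap
    have hm := core ε hε1 (p * p) (3 * d + 1) p hkn hpp.pos (by omega) F hFs hFi m A bb Q hQ hQe hap
    rw [hFc] at hm
    have hm' : (p : ℝ) ^ (3 * d + 1) ≤ m := by exact_mod_cast hm
    have hCp : C < p := by
      have h1 : C ≤ (⌈C⌉₊ : ℝ) := Nat.le_ceil C
      have h2 : (⌈C⌉₊ : ℝ) < p := by exact_mod_cast (by omega : ⌈C⌉₊ < p)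
      linarith
    have h2 : (2 : ℝ) ≤ p := by exact_mod_cast hpp.two_le
    have h3 : ((p * p + 1 : ℕ) : ℝ) ≤ (p : ℝ) ^ 3 := by
      push_cast
      nlinarith [mul_le_mul_of_nonneg_right h2 (by positivity : (0 : ℝ) ≤ (p : ℝ) * p)]
    have h4 : ((p * p + 1 : ℕ) : ℝ) ^ d ≤ (p : ℝ) ^ (3 * d) := by
      rw [pow_mul]
      exact pow_le_pow_left₀ (by positivity) h3 d
    have h5 : (0 : ℝ) < (p : ℝ) ^ (3 * d) := by positivity
    calc C * ((p * p + 1 : ℕ) : ℝ) ^ d ≤ C * (p : ℝ) ^ (3 * d) := by gcongr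
      _ < p * (p : ℝ) ^ (3 * d) := by gcongr
      _ = (p : ℝ) ^ (3 * d + 1) := by ring
      _ ≤ m := hm'
end
end

section
/- Let ε ∈ (0,1), let P ⊆ ℝ^d be a nonempty compact convex set, and let X ⊆ ℝ^d be a finite set such that: (ii) for every x̄ ∈ X there exists c ∈ ℝ^d with (1−ε)·(c·x̄) > max{c·x : x ∈ P}; and (iii) for every pair of distinct points x̄₁, x̄₂ ∈ X, the midpoint (x̄₁ + x̄₂)/2 belongs to P. Then every compact set Q ⊆ ℝ^d that is an ε-approximated formulation of P and is an intersection of m closed half-spaces satisfies m ≥ |X|. -/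
noncomputable section

/-- let `ε ∈ (0,1)`, `P` a nonempty compact convex subset of `ℝ^d`, and `X`
a finite set such that (ii) each `x̄ ∈ X` satisfies `(1-ε)·(c·x̄) > max {c·x : x ∈ P}` for
some objective `c`, and (iii) the midpoint of any two distinct points of `X` lies in `P`.
Then any compact `ε`-approximated formulation `Q` of `P` that is the intersection of `m`
closed half-spaces satisfies `m ≥ |X|`. -/
theorem approx_formulation_needs_many_halfspaces {d : ℕ} (ε : ℝ) (hε0 : 0 < ε) (hε1 : ε < 1)
    (P : Set (Fin d → ℝ)) (hPne : P.Nonempty) (hPc : IsCompact P) (hPconv : Convex ℝ P)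
    (X : Finset (Fin d → ℝ))
    (hii : ∀ xbar ∈ X, ∃ c : Fin d → ℝ,
      sSup ((fun x => dot c x) '' P) < (1 - ε) * dot c xbar)
    (hiii : ∀ x₁ ∈ X, ∀ x₂ ∈ X, x₁ ≠ x₂ → (1/2 : ℝ) • x₁ + (1/2 : ℝ) • x₂ ∈ P)
    (m : ℕ) (a : Fin m → Fin d → ℝ) (b : Fin m → ℝ) (Q : Set (Fin d → ℝ))
    (hQc : IsCompact Q) (hQ : Q = ⋂ i, {x : Fin d → ℝ | dot (a i) x ≤ b i})
    (happ : IsApproxFormulation ε P Q) :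
    X.card ≤ m := by
  obtain ⟨hPQ, hmax⟩ := happ
  have hcont : ∀ c : Fin d → ℝ, Continuous (fun x => dot c x) := by
    intro c
    unfold dot
    fun_prop
  have hviol : ∀ x ∈ X, ∃ i, b i < dot (a i) x := by
    intro x hx
    by_contra hcon
    push Not at hcon
    have hxQ : x ∈ Q := by
      rw [hQ]
      simpa using hcon
    obtain ⟨c, hc⟩ := hii x hx
    have h1 : dot c x ≤ sSup ((fun x => dot c x) '' Q) :=
      le_csSup (hQc.image (hcont c)).bddAbove ⟨x, hxQ, rfl⟩
    have h2 := hmax c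
    have h3 := mul_le_mul_of_nonneg_left h1 (by linarith : (0 : ℝ) ≤ 1 - ε)
    linarith
  rcases X.eq_empty_or_nonempty with hX | ⟨x₀, hx₀⟩
  · simp [hX]
  haveI : Nonempty (Fin m) := ⟨(hviol x₀ hx₀).choose⟩
  choose! f hf using hviol
  have hinj : Set.InjOn f X := by
    intro x hx y hy hxy
    by_contra hne
    have hmid := hPQ (hiii x hx y hy hne)
    rw [hQ] at hmid
    have h := Set.mem_iInter.1 hmid (f x)
    simp only [Set.mem_setOf_eq] at h
    have hlin : dot (a (f x)) ((1/2 : ℝ) • x + (1/2 : ℝ) • y)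
        = (1/2) * dot (a (f x)) x + (1/2) * dot (a (f x)) y := by
      simp only [dot, Finset.mul_sum, ← Finset.sum_add_distrib]
      refine Finset.sum_congr rfl fun i _ => ?_
      simp only [Pi.add_apply, Pi.smul_apply, smul_eq_mul]
      ring
    have hfx := hf x hx
    have hfy := hf y hy
    rw [← hxy] at hfy
    linarith
  have hne : X.card ≤ (Finset.univ : Finset (Fin m)).card :=
    Finset.card_le_card_of_injOn f (fun _ _ => Finset.mem_coe.2 (Finset.mem_univ _)) hinj
  simpa using hne
end
end

section
/- Let P ⊆ ℝ^d be a convex set, let Q = ∩_{i=1}^m {x ∈ ℝ^d : a_i·x ≤ b_i} be a finite intersection of m closed half-spaces with P ⊆ Q, and let X ⊆ ℝ^d be a finite set such that X ∩ Q = ∅ and for every pair of distinct points x̄₁, x̄₂ ∈ X the midpoint (x̄₁ + x̄₂)/2 belongs to P. Then m ≥ |X|. (No single valid inequality can separate two points of X from Q, since the segment between them meets P.) -/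
noncomputable section

/-- if `P` is convex, `Q = ∩_{i=1}^m {x : a_i·x ≤ b_i}` contains `P`,
and `X` is a finite set of points disjoint from `Q` such that the midpoint of any two
distinct points of `X` lies in `P`, then `m ≥ |X|`. -/
theorem halfspace_count_lower_bound {d : ℕ} (P : Set (Fin d → ℝ)) (hPconv : Convex ℝ P)
    (m : ℕ) (a : Fin m → Fin d → ℝ) (b : Fin m → ℝ) (Q : Set (Fin d → ℝ))
    (hQ : Q = ⋂ i, {x : Fin d → ℝ | dot (a i) x ≤ b i})
    (hPQ : P ⊆ Q)
    (X : Finset (Fin d → ℝ)) (hXQ : ∀ x ∈ X, x ∉ Q)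
    (hmid : ∀ x₁ ∈ X, ∀ x₂ ∈ X, x₁ ≠ x₂ → (1/2 : ℝ) • x₁ + (1/2 : ℝ) • x₂ ∈ P) :
    X.card ≤ m := by
  have h : ∀ x : X, ∃ i, b i < dot (a i) x.1 := by
    intro x
    have := hXQ x.1 x.2
    rw [hQ] at this
    simpa using this
  choose f hf using h
  have hinj : Function.Injective f := by
    intro x y hxy
    by_contra hne
    have h1 := hPQ (hmid x.1 x.2 y.1 y.2 (fun h => hne (Subtype.ext h)))
    rw [hQ] at h1
    have h2 : dot (a (f x)) ((1/2 : ℝ) • x.1 + (1/2 : ℝ) • y.1) ≤ b (f x) :=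
      Set.mem_iInter.mp h1 (f x)
    have h3 : dot (a (f x)) ((1/2 : ℝ) • x.1 + (1/2 : ℝ) • y.1)
        = (1/2) * dot (a (f x)) x.1 + (1/2) * dot (a (f x)) y.1 := by
      unfold dot
      rw [Finset.mul_sum, Finset.mul_sum, ← Finset.sum_add_distrib]
      refine Finset.sum_congr rfl fun i _ => ?_
      simp only [Pi.add_apply, Pi.smul_apply, smul_eq_mul]
      ring
    have h4 := hf x
    have h5 := hf y
    rw [← hxy] at h5
    linarith
  simpa using Fintype.card_le_of_injective f hinj
end
end

section
/- Let q be a prime power and let k be a natural number with k < q. Then there exists a family 𝒮 of subsets of 𝔽_q × 𝔽_q (where 𝔽_q is the field with q elements) such that: (a) |S| = q for every S ∈ 𝒮; (b) |S ∩ S'| ≤ k for every pair of distinct S, S' ∈ 𝒮; and (c) |𝒮| = q^{k+1}. Such a family is given by the graphs S_π = {(a, π(a)) : a ∈ 𝔽_q} of the polynomials π over 𝔽_q of degree at most k. -/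
noncomputable section

/-- The graph of a polynomial function. -/
def polyGraph {F : Type} [Field F] [Fintype F] [DecidableEq F] (p : Polynomial F) :
    Finset (F × F) := Finset.image (fun a => (a, p.eval a)) Finset.univ

lemma polyGraph_card {F : Type} [Field F] [Fintype F] [DecidableEq F] (p : Polynomial F) :
    (polyGraph p).card = Fintype.card F := by
  unfold polyGraph
  rw [Finset.card_image_of_injective _ (fun a b h => (Prod.mk.inj h).1), Finset.card_univ]

lemma polyGraph_inter {F : Type} [Field F] [Fintype F] [DecidableEq F] (k : ℕ)
    (p r : Polynomial F) (hp : p.natDegree ≤ k) (hr : r.natDegree ≤ k) (hne : p ≠ r) :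
    (polyGraph p ∩ polyGraph r).card ≤ k := by
  have h0 : p - r ≠ 0 := sub_ne_zero.mpr hne
  have hsub : polyGraph p ∩ polyGraph r ⊆
      (p - r).roots.toFinset.image (fun a => (a, p.eval a)) := by
    rintro ⟨a, b⟩ h
    simp only [polyGraph, Finset.mem_inter, Finset.mem_image, Finset.mem_univ, true_and,
      Prod.mk.injEq] at h
    obtain ⟨⟨x, hx, hx'⟩, ⟨y, hy, hy'⟩⟩ := h
    subst hx
    subst hy
    simp only [Finset.mem_image, Multiset.mem_toFinset, Polynomial.mem_roots h0,
      Polynomial.IsRoot.def, Polynomial.eval_sub]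
    exact ⟨y, by rw [hx', hy', sub_self], by rw [hx']⟩
  calc _ ≤ _ := Finset.card_le_card hsub
    _ ≤ _ := Finset.card_image_le
    _ ≤ _ := Multiset.toFinset_card_le _
    _ ≤ _ := Polynomial.card_roots' _
    _ ≤ k := (Polynomial.natDegree_sub_le _ _).trans (max_le hp hr)

/-- let `q` be a prime power and `k < q`. Over the field `F` with `q` elements,
there is a family `𝒮` of subsets of `F × F`, consisting of graphs of polynomials of degree
at most `k`, such that (a) each member has cardinality `q`, (b) any two distinct members
intersect in at most `k` elements, and (c) `|𝒮| = q^{k+1}`. -/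
theorem polynomial_graphs_set_system (q k : ℕ) (hq : IsPrimePow q) (hk : k < q)
    (F : Type) [Field F] [Fintype F] [DecidableEq F] (hF : Fintype.card F = q) :
    ∃ 𝒮 : Finset (Finset (F × F)),
      (∀ S ∈ 𝒮, ∃ π : Polynomial F, π.natDegree ≤ k ∧
        S = Finset.image (fun a => (a, π.eval a)) Finset.univ) ∧
      (∀ S ∈ 𝒮, S.card = q) ∧
      (∀ S ∈ 𝒮, ∀ S' ∈ 𝒮, S ≠ S' → (S ∩ S').card ≤ k) ∧
      𝒮.card = q ^ (k + 1) := by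
  have hdeg : ∀ c : Fin (k + 1) → F,
      (((Polynomial.degreeLTEquiv F (k + 1)).symm c : Polynomial F)).natDegree ≤ k := by
    intro c
    have h := Polynomial.mem_degreeLT.mp ((Polynomial.degreeLTEquiv F (k + 1)).symm c).2
    refine Polynomial.natDegree_le_iff_coeff_eq_zero.mpr fun N hN => ?_
    exact Polynomial.coeff_eq_zero_of_degree_lt (lt_of_lt_of_le h (Nat.cast_le.mpr hN))
  let g : (Fin (k + 1) → F) → Finset (F × F) :=
    fun c => polyGraph ((Polynomial.degreeLTEquiv F (k + 1)).symm c : Polynomial F)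
  have hg : Function.Injective g := by
    intro c d h
    by_contra hcd
    have hne : ((Polynomial.degreeLTEquiv F (k + 1)).symm c : Polynomial F) ≠
        ((Polynomial.degreeLTEquiv F (k + 1)).symm d : Polynomial F) := fun e =>
      hcd ((Polynomial.degreeLTEquiv F (k + 1)).symm.injective (Subtype.ext e))
    have h1 := polyGraph_inter k _ _ (hdeg c) (hdeg d) hne
    change (g c ∩ g d).card ≤ k at h1
    rw [← h, Finset.inter_self] at h1
    have h2 : (g c).card = Fintype.card F := polyGraph_card _
    omega
  refine ⟨Finset.univ.image g, ?_, ?_, ?_, ?_⟩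
  · intro S hS
    obtain ⟨c, -, rfl⟩ := Finset.mem_image.mp hS
    exact ⟨_, hdeg c, rfl⟩
  · intro S hS
    obtain ⟨c, -, rfl⟩ := Finset.mem_image.mp hS
    exact (polyGraph_card _).trans hF
  · intro S hS S' hS' hne
    obtain ⟨c, -, rfl⟩ := Finset.mem_image.mp hS
    obtain ⟨d, -, rfl⟩ := Finset.mem_image.mp hS'
    exact polyGraph_inter k _ _ (hdeg c) (hdeg d) (fun e => hne (congrArg polyGraph e))
  · rw [Finset.card_image_of_injective _ hg, Finset.card_univ]
    simp [hF]
end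
end

section
/- Let 0 < ε ≤ 1/2, let q ≥ 1 be an integer, set n = q², and let S ⊆ {1,…,n} with |S| = q. Define c ∈ ℝ^{n+1} by c_{n+1} = 1, c_i = 1/(2εq) for i ∈ S, and c_i = 0 for i ∉ S with i ≤ n. Then max{c·x : x ∈ {0,1}^{n+1}, Σ_{i=1}^n x_i/(2εq) + n·x_{n+1} ≤ n + 1/(2ε) − 1} = 1/(2ε). -/
noncomputable section

/-- The objective `c ∈ ℝ^{n+1}` (with `n = q²`) given by `c_{n+1} = 1`,
`c_i = 1/(2εq)` for `i ∈ S`, and `c_i = 0` for the remaining `i ≤ n`. -/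
def cvec (q : ℕ) (ε : ℝ) (S : Finset (Fin (q ^ 2))) : Fin (q ^ 2 + 1) → ℝ :=
  fun j => if h : (j : ℕ) < q ^ 2 then
    (if (⟨j, h⟩ : Fin (q ^ 2)) ∈ S then 1 / (2 * ε * q) else 0)
  else 1

theorem dot_cvec_eq (q : ℕ) (ε : ℝ) (S : Finset (Fin (q ^ 2))) (x : Fin (q ^ 2 + 1) → ℝ) :
    dot (cvec q ε S) x = (∑ i ∈ S, x i.castSucc / (2 * ε * q)) + x (Fin.last (q ^ 2)) := by
  have h1 : ∀ i : Fin (q ^ 2), cvec q ε S i.castSucc * x i.castSucc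
      = if i ∈ S then x i.castSucc / (2 * ε * q) else 0 := by
    intro i
    have hi : ((i.castSucc : Fin (q ^ 2 + 1)) : ℕ) < q ^ 2 := i.isLt
    unfold cvec
    rw [dif_pos hi]
    by_cases h : i ∈ S
    · rw [if_pos h, if_pos (by exact h)]
      ring
    · rw [if_neg h, if_neg (by exact h)]
      ring
  have h2 : cvec q ε S (Fin.last (q ^ 2)) = 1 := by
    simp [cvec]
  unfold dot
  rw [Fin.sum_univ_castSucc, h2, one_mul, Finset.sum_congr rfl (fun i _ => h1 i)]
  simp

/-- for `0 < ε ≤ 1/2`, `q ≥ 1`, `n = q²` and `S ⊆ [n]` with `|S| = q`, the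
maximum of the objective `cvec q ε S` over the feasible 0/1 knapsack points is `1/(2ε)`. -/
theorem knapsack_objective_max (ε : ℝ) (hε0 : 0 < ε) (hε1 : ε ≤ 1 / 2)
    (q : ℕ) (hq : 1 ≤ q) (S : Finset (Fin (q ^ 2))) (hS : S.card = q) :
    IsGreatest ((fun x => dot (cvec q ε S) x) '' knapVert q ε) (1 / (2 * ε)) := by
  have hq' : (1 : ℝ) ≤ q := by exact_mod_cast hq
  have hden : 0 < 2 * ε * q := by positivity
  have hcard : (∑ _i ∈ S, 1 / (2 * ε * (q : ℝ))) = 1 / (2 * ε) := by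
    rw [Finset.sum_const, hS, nsmul_eq_mul]
    field_simp
  constructor
  · refine ⟨Fin.snoc (α := fun _ => ℝ) (fun i => if i ∈ S then (1 : ℝ) else 0) 0, ⟨?_, ?_⟩, ?_⟩
    · intro i
      refine Fin.lastCases ?_ (fun j => ?_) i
      · simp
      · by_cases h : j ∈ S <;> simp [h]
    · have : (∑ i : Fin (q ^ 2), (if i ∈ S then (1 : ℝ) else 0) / (2 * ε * q)) = 1 / (2 * ε) := by
        rw [← hcard]
        simp [ite_div]
      simp only [Fin.snoc_castSucc, Fin.snoc_last]
      rw [this]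
      nlinarith
    · simp only [dot_cvec_eq, Fin.snoc_castSucc, Fin.snoc_last, add_zero]
      rw [← hcard]
      exact Finset.sum_congr rfl (fun i hi => by rw [if_pos hi])
  · rintro _ ⟨x, ⟨hx, hk⟩, rfl⟩
    simp only [dot_cvec_eq]
    have h0 : ∀ i, 0 ≤ x i ∧ x i ≤ 1 := by
      intro i
      rcases hx i with h | h <;> rw [h] <;> norm_num
    rcases hx (Fin.last (q ^ 2)) with h | h
    · rw [h, add_zero, ← hcard]
      refine Finset.sum_le_sum (fun i _ => ?_)
      have := (h0 i.castSucc).2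
      gcongr
    · have : (∑ i ∈ S, x i.castSucc / (2 * ε * q)) ≤ ∑ i : Fin (q ^ 2), x i.castSucc / (2 * ε * q) :=
        Finset.sum_le_sum_of_subset_of_nonneg (Finset.subset_univ S)
          (fun i _ _ => div_nonneg (h0 _).1 hden.le)
      rw [h] at hk ⊢
      linarith
end
end

section
/- Let ε ∈ (0, 2/27), let q ≥ 12 be an integer with q² > 1/ε, and set n = q². Let S, S' ⊆ {1,…,n} be distinct sets with |S| = |S'| = q and |S ∩ S'| ≤ ⌊q/2⌋ − 4. Then the midpoint (x^S + x^{S'})/2 belongs to the knapsack polytope P(n+1,ε). -/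
noncomputable section

/-- The point `x^S ∈ ℝ^{n+1}` (with `n = q²`) given by `x^S_{n+1} = 4/5`,
`x^S_i = 1 − ε/2` for `i ∈ S`, and `x^S_i = 0` otherwise. -/
def xptS (q : ℕ) (ε : ℝ) (S : Finset (Fin (q ^ 2))) : Fin (q ^ 2 + 1) → ℝ :=
  fun j => if h : (j : ℕ) < q ^ 2 then
    (if (⟨j, h⟩ : Fin (q ^ 2)) ∈ S then 1 - ε / 2 else 0)
  else 4 / 5

def indV {ι : Type} [DecidableEq ι] (T : Finset ι) : ι → ℝ := fun i => if i ∈ T then 1 else 0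

def extV {n : ℕ} (f : Fin n → ℝ) (z : ℝ) : Fin (n + 1) → ℝ :=
  fun j => if h : (j : ℕ) < n then f ⟨j, h⟩ else z

lemma avg_mem {ι : Type} [DecidableEq ι] (C : Set (ι → ℝ)) (hC : Convex ℝ C)
    (w : ι → ℝ) (D : Finset ι) (K : ℕ) (hK : 1 ≤ K)
    (h : ∀ T ⊆ D, T.card = K → w + indV T ∈ C) (j : ℕ) :
    ∀ T ⊆ D, T.card = K + j → w + ((K : ℝ) / ((K : ℝ) + j)) • indV T ∈ C := by
  have hK' : (1 : ℝ) ≤ K := by exact_mod_cast hK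
  induction j with
  | zero =>
    intro T hT hc
    have := h T hT (by simpa using hc)
    have e : (K : ℝ) / ((K : ℝ) + (0 : ℕ)) = 1 := by
      field_simp
      simp
    rw [e, one_smul]
    exact this
  | succ j ih =>
    intro T hT hc
    have hj : (0 : ℝ) ≤ j := Nat.cast_nonneg j
    have hcR : (T.card : ℝ) = K + j + 1 := by rw [hc]; push_cast; ring
    have key : ∑ i ∈ T, (1 / (T.card : ℝ)) •
        (w + ((K : ℝ) / ((K : ℝ) + j)) • indV (T.erase i)) ∈ C := by
      apply hC.sum_mem
      · intro i _
        positivity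
      · rw [Finset.sum_const, nsmul_eq_mul, hcR]
        field_simp
      · intro i hi
        apply ih _ ((Finset.erase_subset _ _).trans hT)
        rw [Finset.card_erase_of_mem hi, hc]
        omega
    convert key using 1
    rw [← Finset.smul_sum, Finset.sum_add_distrib, ← Finset.smul_sum, Finset.sum_const]
    have e : ∑ i ∈ T, indV (T.erase i) = ((K : ℝ) + j) • indV T := by
      funext x
      simp only [Finset.sum_apply, indV, Finset.mem_erase, Pi.smul_apply, smul_eq_mul]
      by_cases hx : x ∈ T
      · have : ∀ i ∈ T, (if x ≠ i ∧ x ∈ T then (1 : ℝ) else 0)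
            = 1 - (if x = i then 1 else 0) := by
          intro i _
          by_cases hxi : x = i <;> simp [hxi, hx]
        rw [Finset.sum_congr rfl this, Finset.sum_sub_distrib]
        simp [hx, hcR]
      · simp [hx]
    rw [e]
    funext x
    simp only [Pi.add_apply, Pi.smul_apply, smul_eq_mul, nsmul_eq_mul, hcR, Pi.mul_apply,
      Pi.natCast_apply]
    push_cast
    have : (K : ℝ) + j ≠ 0 := by positivity
    have : (K : ℝ) + j + 1 ≠ 0 := by positivity
    field_simp
    ring

lemma ext_mem (q : ℕ) (ε : ℝ) (T : Finset (Fin (q ^ 2))) (z : ℝ) (hz : z = 0 ∨ z = 1)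
    (h : (T.card : ℝ) / (2 * ε * q) + (q : ℝ) ^ 2 * z ≤ (q ^ 2 : ℝ) + 1 / (2 * ε) - 1) :
    extV (indV T) z ∈ knapP q ε := by
  apply subset_convexHull
  refine ⟨?_, ?_⟩
  · intro i
    unfold extV indV
    split_ifs <;> simp [hz]
  · convert h using 2
    · rw [← Finset.sum_div]
      congr 1
      simp [extV, indV]
    · simp [extV]

/-- for `ε ∈ (0, 2/27)`, an integer `q ≥ 12` with `q² > 1/ε`, `n = q²`, and
distinct `S, S' ⊆ [n]` with `|S| = |S'| = q` and `|S ∩ S'| ≤ ⌊q/2⌋ − 4`, the midpoint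
`(x^S + x^{S'})/2` belongs to the knapsack polytope `P(n+1, ε)`. -/
theorem midpoint_in_knapsack_polytope (ε : ℝ) (hε0 : 0 < ε) (hε1 : ε < 2 / 27)
    (q : ℕ) (hq : 12 ≤ q) (hqε : 1 / ε < ((q : ℝ) ^ 2))
    (S S' : Finset (Fin (q ^ 2))) (hne : S ≠ S')
    (hS : S.card = q) (hS' : S'.card = q)
    (hint : (S ∩ S').card ≤ q / 2 - 4) :
    (1 / 2 : ℝ) • xptS q ε S + (1 / 2 : ℝ) • xptS q ε S' ∈ knapP q ε := by
  classical
  have hqR : (12 : ℝ) ≤ q := by exact_mod_cast hq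
  set I := S ∩ S' with hI
  set D := (S ∪ S') \ I with hD
  have hID : I ⊆ S ∪ S' := Finset.inter_subset_left.trans Finset.subset_union_left
  have hc1 : (S ∪ S').card + I.card = 2 * q := by
    rw [hI, Finset.card_union_add_card_inter]; omega
  have hc2 : D.card + I.card = (S ∪ S').card := by
    rw [hD, Finset.card_sdiff_add_card_eq_card hID]
  have hcI : 2 * I.card + 8 ≤ q := by omega
  have hcIR : 2 * (I.card : ℝ) + 8 ≤ q := by exact_mod_cast hcI
  set c : ℝ := (I.card : ℝ) with hc
  have hc0 : 0 ≤ c := Nat.cast_nonneg _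
  have hm : (D.card : ℝ) = 2 * q - 2 * c := by
    have : D.card + 2 * I.card = 2 * q := by omega
    have : (D.card : ℝ) + 2 * I.card = 2 * q := by exact_mod_cast this
    linarith
  have hεq : ε * q ≤ 2 / 27 * q := by nlinarith
  have hεq0 : 0 < ε * q := by positivity
  have hεc : ε * c ≤ ε * (q / 2) := by apply mul_le_mul_of_nonneg_left _ hε0.le; linarith
  set K := ⌊(q : ℝ) * (1 - 2 * ε)⌋₊ with hK
  have hK1 : (K : ℝ) ≤ q * (1 - 2 * ε) := Nat.floor_le (by nlinarith)
  have hK2 : (q : ℝ) * (1 - 2 * ε) < K + 1 := Nat.lt_floor_add_one _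
  have hKc : I.card + 1 ≤ K := by
    have : (I.card : ℝ) + 1 ≤ K := by rw [← hc]; nlinarith
    exact_mod_cast this
  have hKq : K ≤ q := by
    have : (K : ℝ) ≤ q := by nlinarith
    exact_mod_cast this
  obtain ⟨k, hk⟩ : ∃ k, K = I.card + k := ⟨K - I.card, by omega⟩
  have hk1 : 1 ≤ k := by omega
  have hkR : (K : ℝ) = c + k := by rw [hk]; push_cast; rfl
  have hk1R : (1 : ℝ) ≤ k := by exact_mod_cast hk1
  have hkm : k ≤ D.card := by omega
  have one_mem : ∀ T : Finset (Fin (q ^ 2)), T.card ≤ K → extV (indV T) 1 ∈ knapP q ε := by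
    intro T hT
    apply ext_mem _ _ _ _ (Or.inr rfl)
    have hT' : (T.card : ℝ) ≤ K := by exact_mod_cast hT
    have : (T.card : ℝ) / (2 * ε * q) ≤ 1 / (2 * ε) - 1 := by
      rw [div_le_iff₀ (by positivity)]
      have : (1 / (2 * ε) - 1) * (2 * ε * q) = q * (1 - 2 * ε) := by field_simp
      linarith
    linarith
  have zero_mem : extV (indV (S ∪ S')) 0 ∈ knapP q ε := by
    apply ext_mem _ _ _ _ (Or.inl rfl)
    have hT' : ((S ∪ S').card : ℝ) ≤ 2 * q := by
      have : (S ∪ S').card ≤ 2 * q := by omega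
      exact_mod_cast this
    have : ((S ∪ S').card : ℝ) / (2 * ε * q) ≤ 1 / ε := by
      rw [div_le_iff₀ (by positivity)]
      have : 1 / ε * (2 * ε * q) = 2 * q := by field_simp
      linarith
    have : 1 ≤ 1 / (2 * ε) := by
      rw [le_div_iff₀ (by positivity)]; linarith
    linarith
  have hPconv : Convex ℝ (knapP q ε) := convex_convexHull ℝ _
  set C : Set (Fin (q ^ 2) → ℝ) := {f | extV f 1 ∈ knapP q ε} with hCdef
  have hC : Convex ℝ C := by
    intro f hf g hg a b ha hb hab
    have := hPconv hf hg ha hb hab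
    change extV _ 1 ∈ knapP q ε
    convert this using 1
    funext j
    by_cases h : (j : ℕ) < q ^ 2 <;> simp [extV, h, hab]
  obtain ⟨j, hj⟩ : ∃ j, D.card = k + j := ⟨D.card - k, by omega⟩
  have hjR : (k : ℝ) + j = D.card := by rw [hj]; push_cast; rfl
  have hDI : Disjoint I D := Finset.disjoint_sdiff
  set t : ℝ := (k : ℝ) / D.card with ht
  have P11 : indV I + t • indV D ∈ C := by
    have := avg_mem C hC (indV I) D k hk1 ?_ j D subset_rfl hj
    · rwa [hjR] at this
    · intro T hT hTc
      have hd : Disjoint I T := hDI.mono_right hT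
      have e : indV I + indV T = indV (I ∪ T) := by
        funext x
        have : x ∈ I → x ∉ T := fun h => Finset.disjoint_left.1 hd h
        by_cases h1 : x ∈ I
        · simp [indV, h1, this h1]
        · simp [indV, h1]
      rw [e]
      apply one_mem
      rw [Finset.card_union_of_disjoint hd]; omega
  have P01 : (0 : Fin (q ^ 2) → ℝ) + t • indV D ∈ C := by
    have := avg_mem C hC 0 D k hk1 ?_ j D subset_rfl hj
    · rwa [hjR] at this
    · intro T hT hTc
      rw [zero_add]
      apply one_mem
      omega
  have P10 : indV I ∈ C := one_mem _ (by omega)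
  have P00 : indV (∅ : Finset (Fin (q ^ 2))) ∈ C := one_mem _ (by simp)
  have hmpos : (0 : ℝ) < D.card := by rw [hm]; linarith
  set b : ℝ := 3 / 8 - 5 * ε / 16 with hb
  have hb0 : 0 < b := by rw [hb]; linarith
  set s : ℝ := b * D.card / k with hs
  have hs0 : 0 ≤ s := by positivity
  have hs1 : s ≤ 1 := by
    rw [hs, div_le_one (by linarith), hm, hb]
    nlinarith
  have hst : s * t = b := by
    rw [hs, ht]; field_simp
  have Q1 := hC P11 P10 hs0 (sub_nonneg.2 hs1) (by ring)
  have Q0 := hC P01 P00 hs0 (sub_nonneg.2 hs1) (by ring)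
  have R := hC Q1 Q0 (a := 1 - 5 * ε / 8) (b := 5 * ε / 8) (by linarith) (by linarith) (by ring)
  have F := hPconv R zero_mem (a := 4 / 5) (b := 1 / 5) (by norm_num) (by norm_num) (by norm_num)
  convert F using 1
  funext x
  by_cases hx : (x : ℕ) < q ^ 2
  · simp only [Pi.add_apply, Pi.smul_apply, smul_eq_mul, xptS, extV, hx, dif_pos, indV, hD, hI,
      Finset.mem_sdiff, Finset.mem_union, Finset.mem_inter, Pi.zero_apply]
    by_cases h1 : (⟨x, hx⟩ : Fin (q ^ 2)) ∈ S <;> by_cases h2 : (⟨x, hx⟩ : Fin (q ^ 2)) ∈ S' <;>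
      simp [h1, h2]
    · ring
    · linear_combination (-4 / 5) * hst
    · linear_combination (-4 / 5) * hst
  · simp [xptS, extV, hx]
    norm_num
end
end
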